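/- Let 𝒫 be a generalized perimeter, L > 0, R > 0, E₀ ∈ 𝔠_L ∩ 𝔐_R, and let {h_n}_{n∈ℕ} ⊂ (0,+∞) be a monotonically vanishing sequence. For each n let {E^{(h_n)}_t}_{t ≥ 0} be the approximate flat solution with initial datum E₀ and time step h_n. Then there exist a subsequence {h_k} and a family {E^0_t}_{t ≥ 0} ⊆ 𝔠_L with E^0_0 = E₀ such that |E^{(h_k)}_t Δ E^0_t| → 0 as k → ∞ for every t ≥ 0, and |E^0_t Δ E^0_s| ≤ C |t−s|^{1/2} for every s, t ≥ 0, where C depends only on d, L and 𝒫(E₀). -/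

import Mathlib

open MeasureTheory Filter Set
open scoped ENNReal

noncomputable section

/-- The flat torus `𝕋^{d-1}`. -/
abbrev Torus (d : ℕ) : Type := Fin (d-1) → AddCircle (1:ℝ)

/-- The periodic strip `𝕋^{d-1} × ℝ`. -/
abbrev Cyl (d : ℕ) : Type := Torus d × ℝ

/-- The subgraph of a function `g : 𝕋^{d-1} → ℝ`. -/
def subgraph (d : ℕ) (g : Torus d → ℝ) : Set (Cyl d) := {x | x.2 ≤ g x.1}

/-- The class `𝔠_L` of periodic `L`-Lipschitz subgraphs. -/
def LipClass (d : ℕ) (L : ℝ) : Set (Set (Cyl d)) :=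
  {E | ∃ g : Torus d → ℝ, LipschitzWith (Real.toNNReal L) g ∧ E = subgraph d g}

/-- The slab `𝕊^d_R = 𝕋^{d-1} × (-R, R)`. -/
def SlabR (d : ℕ) (R : ℝ) : Set (Cyl d) := {x | -R < x.2 ∧ x.2 < R}

/-- The class `𝔐_R` of measurable sets squeezed between two halfspaces. -/
def MR (d : ℕ) (R : ℝ) : Set (Set (Cyl d)) :=
  {E | MeasurableSet E ∧ {x : Cyl d | x.2 < -R} ⊆ E ∧ E ⊆ {x : Cyl d | x.2 < R}}

/-- The periodic halfspace `H_λ = 𝕋^{d-1} × (-∞, λ)`. -/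
def halfspace (d : ℕ) (lam : ℝ) : Set (Cyl d) := {x | x.2 < lam}

/-- Translation of `𝕋^{d-1} × ℝ` by a vector `τ ∈ ℝ^d = ℝ^{d-1} × ℝ`,
acting through the quotient. -/
def translCyl (d : ℕ) (τ : (Fin (d-1) → ℝ) × ℝ) (x : Cyl d) : Cyl d :=
  (fun i => x.1 i + (τ.1 i : AddCircle (1:ℝ)), x.2 + τ.2)

/-- A generalized perimeter: a functional `𝒫 : 𝔐 → [0,+∞]` satisfying properties
(i)-(vi) of Definition 1.2. -/
structure GenPerimeter (d : ℕ) where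
  P : Set (Cyl d) → ℝ≥0∞
  /-- (i) finiteness on periodic Lipschitz subgraphs -/
  lip_finite : ∀ L : ℝ, 0 < L → ∀ E ∈ LipClass d L, P E < ⊤
  /-- (ii) `𝒫(∅) = 0` -/
  empty_eq : P ∅ = 0
  /-- (ii) `𝒫(𝕋^{d-1} × ℝ) = 0` -/
  univ_eq : P Set.univ = 0
  /-- (iii) invariance under modifications on null sets -/
  congr_ae : ∀ E E' : Set (Cyl d), volume (symmDiff E E') = 0 → P E = P E'
  /-- (iv) lower semicontinuity w.r.t. local `L¹` convergence -/
  lsc : ∀ (En : ℕ → Set (Cyl d)) (E : Set (Cyl d)),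
      (∀ R : ℝ, 0 < R →
        Tendsto (fun n => volume (symmDiff (En n) E ∩ SlabR d R)) atTop (nhds 0)) →
      P E ≤ liminf (fun n => P (En n)) atTop
  /-- (v) submodularity -/
  submodular : ∀ E F : Set (Cyl d), P (E ∪ F) + P (E ∩ F) ≤ P E + P F
  /-- (vi) translational invariance -/
  transl_inv : ∀ (E : Set (Cyl d)) (τ : (Fin (d-1) → ℝ) × ℝ), P (translCyl d τ '' E) = P E

/-- Signed distance from a set `E`. -/
def sdist (d : ℕ) (E : Set (Cyl d)) (x : Cyl d) : ℝ :=
  Metric.infDist x E - Metric.infDist x Eᶜ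

/-- The incremental functional `𝓕̃_h(E, F) = 𝒫(F) + (1/h) ∫_{F ∩ 𝕊^d_R} sdist_E`. -/
def Ftilde (d : ℕ) (P : GenPerimeter d) (R h : ℝ) (E F : Set (Cyl d)) : EReal :=
  (P.P F : EReal) + (((1/h) * ∫ x in F ∩ SlabR d R, sdist d E x) : ℝ)

/-- `F` minimizes `𝓕̃_h(E, ·)` in `𝔐_R`. -/
def IsMinimizer (d : ℕ) (P : GenPerimeter d) (R h : ℝ) (E F : Set (Cyl d)) : Prop :=
  F ∈ MR d R ∧ ∀ F' ∈ MR d R, Ftilde d P R h E F ≤ Ftilde d P R h E F'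

/-- The discrete-in-time approximate flat solution with time step `h`, initial datum `E₀`:
`Eh k` is the set at time `k h`; each step is the (unique, Lipschitz-subgraph) minimizer of
the incremental problem. -/
def IsApproxFlow (d : ℕ) (P : GenPerimeter d) (L R h : ℝ) (E₀ : Set (Cyl d))
    (Eh : ℕ → Set (Cyl d)) : Prop :=
  Eh 0 = E₀ ∧ ∀ k : ℕ, Eh (k+1) ∈ LipClass d L ∧ IsMinimizer d P R h (Eh k) (Eh (k+1))


instance ff_prob1 : IsProbabilityMeasure (volume : Measure (AddCircle (1:ℝ))) := ⟨by simp⟩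

lemma ff_meas_sub (d : ℕ) (g : Torus d → ℝ) (hg : Continuous g) :
    MeasurableSet (subgraph d g) :=
  measurableSet_le measurable_snd (hg.measurable.comp measurable_fst)

lemma ff_int {d : ℕ} {f : Torus d → ℝ} (hf : Continuous f) : Integrable f := by
  have := hf.continuousOn.integrableOn_compact (μ := volume) (isCompact_univ (X := Torus d))
  simpa using this

/-- The `L¹` distance. -/
def ffD (d : ℕ) (f g : Torus d → ℝ) : ℝ := ∫ x, |f x - g x|

lemma ff_vol (d : ℕ) (f g : Torus d → ℝ) (hf : Continuous f) (hg : Continuous g) :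
    volume (symmDiff (subgraph d f) (subgraph d g)) = ENNReal.ofReal (ffD d f g) := by
  have hm : MeasurableSet (symmDiff (subgraph d f) (subgraph d g)) :=
    (ff_meas_sub d f hf).symmDiff (ff_meas_sub d g hg)
  rw [Measure.volume_eq_prod, Measure.prod_apply hm, ffD,
    ofReal_integral_eq_lintegral_ofReal (ff_int (by fun_prop)) (ae_of_all _ fun x => abs_nonneg _)]
  refine lintegral_congr fun x => ?_
  have : Prod.mk x ⁻¹' symmDiff (subgraph d f) (subgraph d g) = uIoc (g x) (f x) := by
    ext y
    simp only [mem_preimage, mem_symmDiff, subgraph, mem_ofPred_eq, mem_uIoc, not_le]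
    grind
  rw [this, Real.volume_uIoc]

lemma ff_D_sq (d : ℕ) (f g : Torus d → ℝ) (hf : Continuous f) (hg : Continuous g) :
    (ffD d f g)^2 ≤ ∫ x, (f x - g x)^2 := by
  set m := ffD d f g with hm
  have h1 : 0 ≤ ∫ x, (|f x - g x| - m)^2 := integral_nonneg fun x => sq_nonneg _
  have h2 : ∫ x, (|f x - g x| - m)^2 = (∫ x, (f x - g x)^2) - 2 * m * (∫ x, |f x - g x|) + m^2 := by
    have : ∀ x, (|f x - g x| - m)^2 = ((f x - g x)^2 - 2 * m * |f x - g x|) + m^2 := by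
      intro x
      rw [sub_sq, sq_abs]; ring
    simp_rw [this]
    rw [integral_add (ff_int (by fun_prop)) (ff_int (by fun_prop)),
      integral_sub (ff_int (by fun_prop)) (ff_int (by fun_prop)), integral_const_mul]
    simp
  have h3 : ∫ x, |f x - g x| = m := rfl
  rw [h2, h3] at h1
  nlinarith

lemma ff_bounds {d : ℕ} {R : ℝ} {g : Torus d → ℝ} (h : subgraph d g ∈ MR d R) (x : Torus d) :
    -R ≤ g x ∧ g x < R := by
  obtain ⟨_, h1, h2⟩ := h
  constructor
  · refine le_of_forall_lt fun c hc => ?_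
    by_contra hlt
    push Not at hlt
    obtain ⟨e, he1, he2⟩ : ∃ e, g x < e ∧ e < -R ∨ (g x = c ∧ e = c) := by
      rcases hlt.lt_or_eq with h | h
      · exact ⟨c, Or.inl ⟨h, hc⟩⟩
      · exact ⟨c, Or.inr ⟨h, rfl⟩⟩
    · have : ((x, e) : Cyl d) ∈ subgraph d g := h1 he2
      exact absurd this (not_le.2 he1)
    · obtain ⟨e, he1, he2⟩ := exists_between hc
      have : ((x, e) : Cyl d) ∈ subgraph d g := h1 he2
      simp only [subgraph, mem_ofPred_eq] at this
      linarith
  · have : ((x, g x) : Cyl d) ∈ subgraph d g := le_refl (g x)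
    exact h2 this

lemma ff_slabint {d : ℕ} (R : ℝ) {p : Cyl d → ℝ} (hp : Continuous p) :
    IntegrableOn p (SlabR d R) := by
  have hK : IsCompact ((univ : Set (Torus d)) ×ˢ Icc (-R) R) := isCompact_univ.prod isCompact_Icc
  refine (hp.continuousOn.integrableOn_compact hK).mono_set ?_
  intro x hx
  exact ⟨mem_univ _, hx.1.le, hx.2.le⟩

lemma ff_meas_slab (d : ℕ) (R : ℝ) : MeasurableSet (SlabR d R) :=
  (measurableSet_lt measurable_const measurable_snd).inter
    (measurableSet_lt measurable_snd measurable_const)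

lemma ff_sdist_cont (d : ℕ) (E : Set (Cyl d)) : Continuous (sdist d E) :=
  (Metric.continuous_infDist_pt _).sub (Metric.continuous_infDist_pt _)

lemma ff_fub {d : ℕ} {R : ℝ} (f g : Torus d → ℝ) (hf : Continuous f) (hg : Continuous g)
    (hfR : subgraph d f ∈ MR d R) :
    ∫ x in subgraph d f ∩ SlabR d R, (x.2 - g x.1)
      = ∫ x, ((f x - g x)^2 - (-R - g x)^2)/2 := by
  have hm : MeasurableSet (subgraph d f ∩ SlabR d R) :=
    (ff_meas_sub d f hf).inter (ff_meas_slab d R)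
  have hi : IntegrableOn (fun x : Cyl d => x.2 - g x.1) (subgraph d f ∩ SlabR d R) :=
    (ff_slabint R (by fun_prop)).mono_set inter_subset_right
  rw [← integral_indicator hm, Measure.volume_eq_prod, integral_prod]
  · refine integral_congr_ae (ae_of_all _ fun x => ?_)
    have hb := ff_bounds hfR x
    have : ∀ y : ℝ, (subgraph d f ∩ SlabR d R).indicator (fun x : Cyl d => x.2 - g x.1) (x, y)
        = (Ioc (-R) (f x)).indicator (fun y => y - g x) y := by
      intro y
      simp only [indicator, subgraph, SlabR, mem_inter_iff, mem_ofPred_eq, mem_Ioc]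
      grind
    simp_rw [this]
    rw [integral_indicator measurableSet_Ioc, ← intervalIntegral.integral_of_le hb.1,
      intervalIntegral.integral_comp_sub_right (fun y => y), integral_id]
  · rw [← Measure.volume_eq_prod]
    exact hi.integrable_indicator hm

lemma ff_J {d : ℕ} {L R : ℝ} (hL : 0 < L) (f g : Torus d → ℝ) (hf : Continuous f)
    (hg : LipschitzWith (Real.toNNReal L) g)
    (hfR : subgraph d f ∈ MR d R) (hgR : subgraph d g ∈ MR d R) :
    (ffD d f g)^2 ≤ 2 * (1 + L) * ((∫ x in subgraph d f ∩ SlabR d R, sdist d (subgraph d g) x)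
      - ∫ x in subgraph d g ∩ SlabR d R, sdist d (subgraph d g) x) := by
  have hgc := hg.continuous
  set E := subgraph d g with hE
  set F := subgraph d f with hF
  have hmF : MeasurableSet (F ∩ SlabR d R) := (ff_meas_sub d f hf).inter (ff_meas_slab d R)
  have hmE : MeasurableSet (E ∩ SlabR d R) := (ff_meas_sub d g hgc).inter (ff_meas_slab d R)
  have hI : ∀ {p : Cyl d → ℝ} (A : Set (Cyl d)), Continuous p → IntegrableOn p (A ∩ SlabR d R) :=
    fun A hp => (ff_slabint R hp).mono_set inter_subset_right
  have hs := ff_sdist_cont d E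
  have hpc : Continuous (fun x : Cyl d => x.2 - g x.1) := by fun_prop
  have hlip : ∀ x y, g x - g y ≤ L * dist x y := by
    intro x y
    have := hg.dist_le_mul x y
    rw [Real.coe_toNNReal L hL.le, Real.dist_eq] at this
    exact (le_abs_self _).trans this
  have hd1 : ∀ x y : Cyl d, dist x.1 y.1 ≤ dist x y := fun x y => le_max_left _ _
  have hd2 : ∀ x y : Cyl d, |x.2 - y.2| ≤ dist x y := fun x y => le_max_right _ _
  have neE : E.Nonempty := ⟨((0 : Torus d), g 0), le_refl (g 0)⟩
  have neEc : Eᶜ.Nonempty := ⟨((0 : Torus d), g 0 + 1), by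
    simp [hE, subgraph]⟩
  have key1 : ∀ x ∉ E, x.2 - g x.1 ≤ (1 + L) * sdist d E x := by
    intro x hx
    have h0 : Metric.infDist x Eᶜ = 0 := Metric.infDist_zero_of_mem hx
    have : (x.2 - g x.1) / (1 + L) ≤ Metric.infDist x E := by
      refine (Metric.le_infDist neE).2 fun y hy => ?_
      rw [div_le_iff₀ (by linarith)]
      have h1 := hlip y.1 x.1
      have h2 := hd1 x y
      have h3 := (le_abs_self _).trans (hd2 x y)
      have h4 : y.2 ≤ g y.1 := hy
      rw [dist_comm] at h1
      nlinarith
    rw [div_le_iff₀ (by linarith)] at this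
    simp only [sdist, h0]; linarith
  have key2 : ∀ x ∈ E, (1 + L) * sdist d E x ≤ x.2 - g x.1 := by
    intro x hx
    have h0 : Metric.infDist x E = 0 := Metric.infDist_zero_of_mem hx
    have : (g x.1 - x.2) / (1 + L) ≤ Metric.infDist x Eᶜ := by
      refine (Metric.le_infDist neEc).2 fun y hy => ?_
      rw [div_le_iff₀ (by linarith)]
      have h1 := hlip x.1 y.1
      have h2 := hd1 x y
      have h3 := (neg_le_abs _).trans (hd2 x y)
      have h4 : g y.1 < y.2 := not_le.1 hy
      nlinarith
    rw [div_le_iff₀ (by linarith)] at this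
    simp only [sdist, h0]; linarith
  have hmono : (∫ x in F ∩ SlabR d R, (x.2 - g x.1)) - (∫ x in E ∩ SlabR d R, (x.2 - g x.1))
      ≤ (1 + L) * ((∫ x in F ∩ SlabR d R, sdist d E x) - ∫ x in E ∩ SlabR d R, sdist d E x) := by
    rw [mul_sub, ← integral_const_mul, ← integral_const_mul,
      ← integral_indicator hmF, ← integral_indicator hmE, ← integral_indicator hmF,
      ← integral_indicator hmE, ← integral_sub, ← integral_sub]
    · refine integral_mono ?_ ?_ ?_
      · exact ((hI F hpc).integrable_indicator hmF).sub ((hI E hpc).integrable_indicator hmE)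
      · exact ((hI F (by fun_prop)).integrable_indicator hmF).sub
          ((hI E (by fun_prop)).integrable_indicator hmE)
      · intro x
        have k1 := key1 x
        have k2 := key2 x
        simp only [indicator, mem_inter_iff]
        by_cases h1 : x ∈ E <;> by_cases h2 : x ∈ F <;> by_cases h3 : x ∈ SlabR d R <;>
          simp [h1, h2, h3] at k1 k2 ⊢ <;> linarith
    · exact (hI F (by fun_prop)).integrable_indicator hmF
    · exact (hI E (by fun_prop)).integrable_indicator hmE
    · exact (hI F hpc).integrable_indicator hmF
    · exact (hI E hpc).integrable_indicator hmE
  rw [ff_fub f g hf hgc hfR, ff_fub g g hgc hgc hgR, ← integral_sub (ff_int (by fun_prop))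
    (ff_int (by fun_prop))] at hmono
  have : ∀ x, ((f x - g x)^2 - (-R - g x)^2)/2 - ((g x - g x)^2 - (-R - g x)^2)/2
      = (1/2) * (f x - g x)^2 := by intro x; ring
  simp_rw [this] at hmono
  rw [integral_const_mul] at hmono
  have := ff_D_sq d f g hf hgc
  linarith

lemma ff_step {d : ℕ} {L R h : ℝ} (hL : 0 < L) (hh : 0 < h) (P : GenPerimeter d)
    (f g : Torus d → ℝ) (hf : LipschitzWith (Real.toNNReal L) f)
    (hg : LipschitzWith (Real.toNNReal L) g) (hgR : subgraph d g ∈ MR d R)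
    (hmin : IsMinimizer d P R h (subgraph d g) (subgraph d f)) :
    (ffD d f g)^2 ≤ 2 * (1 + L) * h * ((P.P (subgraph d g)).toReal - (P.P (subgraph d f)).toReal) := by
  have h1 := ff_J hL f g hf.continuous hg hmin.1 hgR
  have h2 := hmin.2 _ hgR
  unfold Ftilde at h2
  have e1 := P.lip_finite L hL _ ⟨f, hf, rfl⟩
  have e2 := P.lip_finite L hL _ ⟨g, hg, rfl⟩
  rw [← EReal.coe_ennreal_toReal e1.ne, ← EReal.coe_ennreal_toReal e2.ne] at h2
  norm_cast at h2
  set A := ∫ x in subgraph d f ∩ SlabR d R, sdist d (subgraph d g) x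
  set B := ∫ x in subgraph d g ∩ SlabR d R, sdist d (subgraph d g) x
  have h3 : A - B ≤ h * ((P.P (subgraph d g)).toReal - (P.P (subgraph d f)).toReal) := by
    have : (1/h) * (A - B) ≤ (P.P (subgraph d g)).toReal - (P.P (subgraph d f)).toReal := by
      linarith
    rw [one_div, inv_mul_le_iff₀ hh] at this
    exact this
  nlinarith

lemma ff_D_nonneg (d : ℕ) (f g : Torus d → ℝ) : 0 ≤ ffD d f g :=
  integral_nonneg fun _ => abs_nonneg _

lemma ff_D_comm (d : ℕ) (f g : Torus d → ℝ) : ffD d f g = ffD d g f := by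
  simp only [ffD, abs_sub_comm]

lemma ff_D_tri (d : ℕ) (f g k : Torus d → ℝ) (hf : Continuous f) (hg : Continuous g)
    (hk : Continuous k) : ffD d f k ≤ ffD d f g + ffD d g k := by
  unfold ffD
  rw [← integral_add (ff_int (by fun_prop)) (ff_int (by fun_prop))]
  exact integral_mono (ff_int (by fun_prop)) (ff_int (by fun_prop)) fun x => abs_sub_le _ _ _

lemma ff_D_le (d : ℕ) (f g : BoundedContinuousFunction (Torus d) ℝ) : ffD d f g ≤ dist f g := by
  unfold ffD
  have : ∫ x : Torus d, |f x - g x| ≤ ∫ x : Torus d, dist f g :=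
    integral_mono (ff_int (by fun_prop)) (integrable_const _)
      fun x => by
        have := BoundedContinuousFunction.dist_coe_le_dist (f := f) (g := g) x
        rwa [Real.dist_eq] at this
  simpa using this

lemma ff_arith {D a K m Δ δ D' : ℝ} (hK : 0 ≤ K) (hm : 0 ≤ m) (hΔ : 0 ≤ Δ) (hδ : 0 ≤ δ)
    (hD : D^2 ≤ K * m * Δ) (ha : a^2 ≤ K * δ) (hD0 : 0 ≤ D') (hD' : D' ≤ a + D) :
    D'^2 ≤ K * (m + 1) * (Δ + δ) := by
  have h1 : 2 * (D * a) ≤ K * (m * δ + Δ) := by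
    refine abs_le_of_sq_le_sq' ?_ (by positivity) |>.2
    have : D^2 * a^2 ≤ (K * m * Δ) * (K * δ) := by gcongr
    nlinarith [sq_nonneg (K * (m * δ - Δ))]
  have h2 : D'^2 ≤ (a + D)^2 := by gcongr
  nlinarith

lemma ff_iter {d : ℕ} {K : ℝ} (hK : 0 < K) (g : ℕ → Torus d → ℝ) (hg : ∀ k, Continuous (g k))
    (p : ℕ → ℝ) (hs : ∀ k, (ffD d (g (k+1)) (g k))^2 ≤ K * (p k - p (k+1))) (i m : ℕ) :
    p (i + m) ≤ p i ∧ (ffD d (g (i+m)) (g i))^2 ≤ K * m * (p i - p (i+m)) := by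
  induction m with
  | zero => simp [ffD]
  | succ m ih =>
    have h1 := hs (i+m)
    have h2 : 0 ≤ p (i+m) - p (i+m+1) := by
      by_contra hc
      push Not at hc
      nlinarith [sq_nonneg (ffD d (g (i+m+1)) (g (i+m)))]
    refine ⟨by rw [← add_assoc]; linarith [ih.1], ?_⟩
    have := ff_arith hK.le (Nat.cast_nonneg m) (sub_nonneg.2 ih.1) h2 ih.2 h1
      (ff_D_nonneg d (g (i+m+1)) (g i)) (ff_D_tri d _ _ _ (hg _) (hg _) (hg _))
    rw [← add_assoc]
    push_cast
    convert this using 2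
    ring

lemma ff_time {d : ℕ} {K h : ℝ} (hK : 0 < K) (hh : 0 < h) (g : ℕ → Torus d → ℝ)
    (hg : ∀ k, Continuous (g k))
    (p : ℕ → ℝ) (hp : ∀ k, 0 ≤ p k)
    (hs : ∀ k, (ffD d (g (k+1)) (g k))^2 ≤ K * h * (p k - p (k+1)))
    (s t : ℝ) (h0 : 0 ≤ s) (ht : 0 ≤ t) :
    ffD d (g ⌊t/h⌋₊) (g ⌊s/h⌋₊) ≤ Real.sqrt (K * p 0 * (|t - s| + h)) := by
  wlog hst : s ≤ t generalizing s t
  · rw [ff_D_comm, abs_sub_comm]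
    exact this t s ht h0 (le_of_not_ge hst)
  apply Real.le_sqrt_of_sq_le
  rw [abs_of_nonneg (sub_nonneg.2 hst)]
  have hfl : ⌊s/h⌋₊ ≤ ⌊t/h⌋₊ := Nat.floor_mono (by gcongr)
  obtain ⟨m, hm⟩ := Nat.exists_eq_add_of_le hfl
  have h1 := (ff_iter (mul_pos hK hh) g hg p hs ⌊s/h⌋₊ m).2
  have h2 := (ff_iter (mul_pos hK hh) g hg p hs 0 ⌊s/h⌋₊).1
  rw [zero_add] at h2
  rw [hm]
  have h3 : (m:ℝ) * h ≤ t - s + h := by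
    have a1 := Nat.floor_le (show 0 ≤ t/h by positivity)
    have a2 := Nat.lt_floor_add_one (s/h)
    rw [hm] at a1
    push_cast at a1
    rw [le_div_iff₀ hh] at a1
    rw [div_lt_iff₀ hh] at a2
    nlinarith
  refine h1.trans ?_
  have h4 : p ⌊s/h⌋₊ - p (⌊s/h⌋₊ + m) ≤ p 0 := by linarith [hp (⌊s/h⌋₊ + m)]
  calc K * h * m * (p ⌊s/h⌋₊ - p (⌊s/h⌋₊ + m)) ≤ K * h * m * p 0 := by gcongr
    _ = K * p 0 * (m * h) := by ring
    _ ≤ _ := by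
      have := hp 0
      gcongr

/-- The compact class of functions. -/
def ffK (d : ℕ) (L R : ℝ) : Set (BoundedContinuousFunction (Torus d) ℝ) :=
  {f | LipschitzWith (Real.toNNReal L) f ∧ ∀ x, f x ∈ Icc (-R) R}

lemma ff_K_compact (d : ℕ) (L R : ℝ) : IsCompact (ffK d L R) := by
  refine BoundedContinuousFunction.arzela_ascoli₂ (Icc (-R) R) isCompact_Icc _ ?_
    (fun f x hf => hf.2 x) ?_
  · have e : ffK d L R = (⋂ x, ⋂ y, {f | dist (f x) (f y) ≤ (Real.toNNReal L) * dist x y}) ∩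
        ⋂ x, {f | f x ∈ Icc (-R) R} := by
      ext f
      simp only [ffK, lipschitzWith_iff_dist_le_mul, mem_ofPred_eq, mem_inter_iff, mem_iInter]
    rw [e]
    refine IsClosed.inter ?_ ?_
    · refine isClosed_iInter fun x => isClosed_iInter fun y => ?_
      exact isClosed_le (by fun_prop) continuous_const
    · refine isClosed_iInter fun x => ?_
      exact isClosed_Icc.preimage (f := fun f : BoundedContinuousFunction (Torus d) ℝ => f x) (by fun_prop)
  · exact (LipschitzWith.uniformEquicontinuous _ (Real.toNNReal L) fun f => f.2.1).equicontinuous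

lemma ff_extract {d : ℕ} {L R : ℝ} (u : ℕ → ℝ → BoundedContinuousFunction (Torus d) ℝ)
    (hu : ∀ n t, u n t ∈ ffK d L R) (hn : ℕ → ℝ) (hlim : Tendsto hn atTop (nhds 0))
    (M : ℝ)
    (hD : ∀ n s t, 0 ≤ s → 0 ≤ t → ffD d (u n t) (u n s) ≤ Real.sqrt (M * (|t - s| + hn n))) :
    ∃ φ : ℕ → ℕ, StrictMono φ ∧ ∃ v : ℝ → BoundedContinuousFunction (Torus d) ℝ,
      (∀ t, v t ∈ ffK d L R) ∧
      (∀ t, 0 ≤ t → Tendsto (fun k => ffD d (u (φ k) t) (v t)) atTop (nhds 0)) ∧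
      (∀ s t, 0 ≤ s → 0 ≤ t → ffD d (v t) (v s) ≤ Real.sqrt (M * |t - s|)) ∧
      (∀ t f, (∀ n, u n t = f) → v t = f) := by
  have hcomp := isCompact_univ_pi (fun _ : ℚ => ff_K_compact d L R)
  obtain ⟨w, -, φ, hφ, hw⟩ := hcomp.tendsto_subseq (x := fun n (q : ℚ) => u n (q:ℝ))
    (fun n q _ => hu n q)
  rw [tendsto_pi_nhds] at hw
  have hsub : ∀ t, ∃ v ∈ ffK d L R, ∃ ψ : ℕ → ℕ, StrictMono ψ ∧
      Tendsto ((fun k => u (φ k) t) ∘ ψ) atTop (nhds v) :=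
    fun t => (ff_K_compact d L R).tendsto_subseq fun k => hu (φ k) t
  choose v hv ψ hψ hvl using hsub
  have cts : ∀ f : BoundedContinuousFunction (Torus d) ℝ, Continuous f := fun f => f.continuous
  have hDlim : ∀ s t, Tendsto (fun k => Real.sqrt (M * (|t - s| + hn (φ k)))) atTop
      (nhds (Real.sqrt (M * |t - s|))) := by
    intro s t
    have h1 : Tendsto (fun k => M * (|t - s| + hn (φ k))) atTop (nhds (M * (|t - s| + 0))) :=
      ((hlim.comp hφ.tendsto_atTop).const_add _).const_mul _
    rw [add_zero] at h1
    exact h1.sqrt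
  have hconv : ∀ t, 0 ≤ t → Tendsto (fun k => ffD d (u (φ k) t) (v t)) atTop (nhds 0) := by
    intro t ht
    rw [Metric.tendsto_atTop]
    intro ε hε
    -- choose a rational time close to `t`
    obtain ⟨q, hq0, hq⟩ : ∃ q : ℚ, (0:ℝ) ≤ q ∧ Real.sqrt (M * |t - q|) < ε/8 := by
      have hc : Tendsto (fun q : ℝ => Real.sqrt (M * |t - q|)) (nhds t) (nhds 0) := by
        have : Continuous (fun q : ℝ => Real.sqrt (M * |t - q|)) := by fun_prop
        simpa using this.tendsto t
      have := (hc.eventually (gt_mem_nhds (show 0 < ε/8 by positivity)))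
      obtain ⟨δ, hδ, hball⟩ := Metric.eventually_nhds_iff.1 this
      obtain ⟨q, hq1, hq2⟩ := exists_rat_btwn (show t < t + δ by linarith)
      refine ⟨q, by linarith, hball ?_⟩
      rw [Real.dist_eq, abs_lt]; constructor <;> linarith
    have e1 : ∀ᶠ k in atTop, ffD d (u (φ k) t) (u (φ k) q) < ε/8 := by
      filter_upwards [(hDlim q t).eventually (gt_mem_nhds hq)] with k hk
      exact (hD (φ k) q t hq0 ht).trans_lt hk
    have e2 : ∀ᶠ k in atTop, ffD d (u (φ k) q) (w q) < ε/8 := by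
      have := (Metric.tendsto_nhds.1 (hw q)) (ε/8) (by positivity)
      filter_upwards [this] with k hk
      exact (ff_D_le d _ _).trans_lt hk
    have e3 : ∀ᶠ k in atTop, ffD d (u (φ (ψ t k)) t) (v t) < ε/8 := by
      have := (Metric.tendsto_nhds.1 (hvl t)) (ε/8) (by positivity)
      filter_upwards [this] with k hk
      exact (ff_D_le d _ _).trans_lt hk
    have e12 := e1.and e2
    obtain ⟨m, hm3, hm1, hm2⟩ := (e3.and ((hψ t).tendsto_atTop.eventually e12)).exists
    obtain ⟨N, hN⟩ := eventually_atTop.1 e12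
    refine ⟨N, fun k hk => ?_⟩
    obtain ⟨k1, k2⟩ := hN k hk
    rw [Real.dist_eq, sub_zero, abs_of_nonneg (ff_D_nonneg _ _ _)]
    have t1 := ff_D_tri d (u (φ k) t) (u (φ k) q) (v t) (cts _) (cts _) (cts _)
    have t2 := ff_D_tri d (u (φ k) q) (w q) (v t) (cts _) (cts _) (cts _)
    have t3 := ff_D_tri d (w q) (u (φ (ψ t m)) q) (v t) (cts _) (cts _) (cts _)
    have t4 := ff_D_tri d (u (φ (ψ t m)) q) (u (φ (ψ t m)) t) (v t) (cts _) (cts _) (cts _)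
    rw [ff_D_comm d (w q) (u (φ (ψ t m)) q)] at t3
    rw [ff_D_comm d (u (φ (ψ t m)) q) (u (φ (ψ t m)) t)] at t4
    linarith
  refine ⟨φ, hφ, v, hv, hconv, ?_, ?_⟩
  · intro s t hs ht
    have h1 := (((hconv t ht).add (hDlim s t)).add (hconv s hs))
    rw [zero_add, add_zero] at h1
    refine ge_of_tendsto' h1 fun k => ?_
    have t1 := ff_D_tri d (v t) (u (φ k) t) (v s) (cts _) (cts _) (cts _)
    have t2 := ff_D_tri d (u (φ k) t) (u (φ k) s) (v s) (cts _) (cts _) (cts _)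
    rw [ff_D_comm d (v t) (u (φ k) t)] at t1
    have := hD (φ k) s t hs ht
    linarith
  · intro t f hf
    have := hvl t
    have e : (fun k => u (φ k) t) ∘ ψ t = fun _ => f := by
      funext k; exact hf _
    rw [e] at this
    exact tendsto_nhds_unique this tendsto_const_nhds

/-- Existence of flat flows: along a subsequence, the approximate flat solutions converge
for every time to a `1/2`-Hölder continuous (in measure) family of Lipschitz subgraphs. -/
theorem exists_flatFlow (d : ℕ) (hd : 2 ≤ d) (L : ℝ) (hL : 0 < L) :
    ∃ C : ℝ≥0∞ → ℝ,
      ∀ (P : GenPerimeter d) (R : ℝ), 0 < R → ∀ E₀ ∈ LipClass d L ∩ MR d R,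
      ∀ hn : ℕ → ℝ, (∀ n, 0 < hn n) → Antitone hn → Tendsto hn atTop (nhds 0) →
      ∀ Eflow : ℕ → ℕ → Set (Cyl d), (∀ n, IsApproxFlow d P L R (hn n) E₀ (Eflow n)) →
      ∃ φ : ℕ → ℕ, StrictMono φ ∧ ∃ E0 : ℝ → Set (Cyl d),
        E0 0 = E₀ ∧ (∀ t : ℝ, 0 ≤ t → E0 t ∈ LipClass d L) ∧
        (∀ t : ℝ, 0 ≤ t →
          Tendsto (fun k => volume (symmDiff (Eflow (φ k) ⌊t / hn (φ k)⌋₊) (E0 t)))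
            atTop (nhds 0)) ∧
        0 < C (P.P E₀) ∧
        (∀ s t : ℝ, 0 ≤ s → 0 ≤ t →
          (volume (symmDiff (E0 t) (E0 s))).toReal ≤ C (P.P E₀) * |t - s| ^ (1/2 : ℝ)) := by
  refine ⟨fun p => Real.sqrt (2 * (1 + L) * p.toReal) + 1, ?_⟩
  intro P R hR E₀ hE₀ hn hpos _ hlim Eflow hflow
  have hlip : ∀ n k, Eflow n k ∈ LipClass d L := by
    intro n k
    cases k with
    | zero => rw [(hflow n).1]; exact hE₀.1
    | succ k => exact ((hflow n).2 k).1
  have hMR : ∀ n k, Eflow n k ∈ MR d R := by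
    intro n k
    cases k with
    | zero => rw [(hflow n).1]; exact hE₀.2
    | succ k => exact ((hflow n).2 k).2.1
  obtain ⟨g₀, hg₀, rfl⟩ := hE₀.1
  choose g hg hgE using hlip
  have hinj : ∀ a b : Torus d → ℝ, subgraph d a = subgraph d b → a = b := by
    intro a b hab
    funext x
    have h1 : ((x, a x) : Cyl d) ∈ subgraph d b := hab ▸ (le_refl (a x) : ((x, a x) : Cyl d) ∈ subgraph d a)
    have h2 : ((x, b x) : Cyl d) ∈ subgraph d a := hab ▸ (le_refl (b x) : ((x, b x) : Cyl d) ∈ subgraph d b)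
    exact le_antisymm h1 h2
  have hg0 : ∀ n, g n 0 = g₀ := fun n => hinj _ _ (by rw [← hgE, (hflow n).1])
  set G : ℕ → ℕ → BoundedContinuousFunction (Torus d) ℝ := fun n k =>
    BoundedContinuousFunction.mkOfCompact ⟨g n k, (hg n k).continuous⟩ with hG
  have hGg : ∀ n k, (G n k : Torus d → ℝ) = g n k := fun n k => rfl
  set p := (P.P (subgraph d g₀)).toReal with hp
  have hstep : ∀ n k, (ffD d (g n (k+1)) (g n k))^2 ≤ 2 * (1 + L) * hn n *
      ((P.P (subgraph d (g n k))).toReal - (P.P (subgraph d (g n (k+1)))).toReal) := by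
    intro n k
    refine ff_step (R := R) hL (hpos n) P _ _ (hg _ _) (hg _ _) ?_ ?_
    · rw [← hgE]; exact hMR n k
    · rw [← hgE, ← hgE]; exact ((hflow n).2 k).2
  obtain ⟨φ, hφ, v, hvK, hvc, hvH, hv0⟩ := ff_extract (L := L) (R := R)
    (fun n t => G n ⌊t / hn n⌋₊)
    (fun n t => ⟨hg _ _, fun x => by
      have := hMR n ⌊t / hn n⌋₊
      rw [hgE] at this
      exact ⟨(ff_bounds this x).1, (ff_bounds this x).2.le⟩⟩) hn hlim (2 * (1 + L) * p)
    (fun n s t hs ht => by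
      have := ff_time (K := 2 * (1 + L)) (by positivity) (hpos n) (g n)
        (fun k => (hg n k).continuous)
        (fun k => (P.P (subgraph d (g n k))).toReal) (fun k => ENNReal.toReal_nonneg)
        (hstep n) s t hs ht
      simp only [hg0] at this
      exact this)
  refine ⟨φ, hφ, fun t => subgraph d (v t), ?_, fun t _ => ⟨v t, (hvK t).1, rfl⟩, ?_, by positivity, ?_⟩
  · have := hv0 0 (BoundedContinuousFunction.mkOfCompact ⟨g₀, hg₀.continuous⟩) (fun n => by
      ext x
      simp [hG, hg0])
    simp only [this]
    rfl
  · intro t ht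
    have h1 := ENNReal.tendsto_ofReal (hvc t ht)
    rw [ENNReal.ofReal_zero] at h1
    refine h1.congr fun k => ?_
    rw [hgE, ff_vol d _ _ (hg _ _).continuous (v t).continuous]
    rfl
  · intro s t hs ht
    rw [ff_vol d _ _ (v t).continuous (v s).continuous, ENNReal.toReal_ofReal (ff_D_nonneg _ _ _)]
    refine (hvH s t hs ht).trans ?_
    rw [Real.sqrt_mul (by positivity), ← Real.sqrt_eq_rpow]
    gcongr
    exact le_add_of_nonneg_right zero_le_one
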